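/- arXiv:1301.5799 — 3 statements merged into one kernel-verified Lean document; each statement's English description precedes it below -/
import Mathlib

section
/- Let K be a compact Hausdorff space and G = ⋂_{n∈ℕ} cl(U_n), where each U_n is an open subset of K and cl denotes closure in K. If D is induced by an r-skeleton in K, then G ∩ D is dense in G; consequently, G ∩ D is induced by an r-skeleton in the compact space G. -/
/-!
Let `F n` be countably many closed sets in each of which `D` is dense (for instance closures of
open sets), and let `G` be their intersection. If cofinally many of the retractions `r t` map `G`
into itself, they restrict to an r-skeleton in `G` inducing `G ∩ D`; density of `G ∩ D` in `G` then
comes for free, because `r t x → x`.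

To find such `t` above a given `s`, use that `r s [K]` is second countable: countably many points
of `D` suffice to approximate all the sets `r s [F n]`, and a single `s' ≥ s` fixes all of them, so
that `r s [F n] = r s [F n ∩ r s' [K]]` by compactness. Iterating gives `s₀ ≤ s₁ ≤ ⋯` with supremum
`t`. For `x ∈ F n` the compact sets `{y ∈ F n ∩ r t [K] | r s_k y = r s_k x}` are nonempty and
decrease with `k`; a point `y` common to all of them satisfies `y = r t y = r t x`, so
`r t x ∈ F n`.
-/

open Filter Topology TopologicalSpace Set

universe u v

/-- A retractional skeleton in a topological space `K`: a family `r s : C(K, K)` of continuous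
retractions indexed by an up-directed (nonempty) partially ordered set `Γ` such that
(i) each `r s` has metrizable range and the net `(r s x)` converges to `x`;
(ii) `s ≤ t` implies `r s ∘ r t = r t ∘ r s = r s`;
(iii) each strictly increasing sequence has a supremum `t` and `r t x = lim_n r (f n) x`. -/
structure RetractionalSkeleton (K : Type u) [TopologicalSpace K] : Type (u + 1) where
  Γ : Type u
  [po : PartialOrder Γ]
  [ne : Nonempty Γ]
  directed : ∀ s t : Γ, ∃ w, s ≤ w ∧ t ≤ w
  r : Γ → C(K, K)
  isRetraction : ∀ s, ∀ x : K, r s (r s x) = r s x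
  metrizable : ∀ s, MetrizableSpace ↥(Set.range (r s))
  tendsto_id : ∀ x : K, Tendsto (fun s => r s x) atTop (𝓝 x)
  comp_eq_of_le : ∀ s t : Γ, s ≤ t → ∀ x : K, r s (r t x) = r s x ∧ r t (r s x) = r s x
  sup_seq : ∀ f : ℕ → Γ, StrictMono f → ∃ t : Γ, IsLUB (Set.range f) t ∧
    ∀ x : K, Tendsto (fun n => r (f n) x) atTop (𝓝 (r t x))

/-- The set `D(𝔰) = ⋃ s, r s [K]` induced by a retractional skeleton. -/
def RetractionalSkeleton.inducedSet {K : Type u} [TopologicalSpace K]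
    (𝔰 : RetractionalSkeleton K) : Set K := ⋃ s, Set.range (𝔰.r s)

/-- `D` is induced by an r-skeleton in `K`. -/
def IsInducedByRSkeleton {K : Type u} [TopologicalSpace K] (D : Set K) : Prop :=
  ∃ 𝔰 : RetractionalSkeleton K, 𝔰.inducedSet = D

/-- `K` has a retractional skeleton. -/
def HasRetractionalSkeleton (K : Type u) [TopologicalSpace K] : Prop :=
  Nonempty (RetractionalSkeleton K)

theorem closure_subset_closure_inter_of_isOpen_of_dense {X : Type*} [TopologicalSpace X]
    {U D : Set X} (hU : IsOpen U) (hD : Dense D) : closure U ⊆ closure (closure U ∩ D) :=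
  closure_minimal ((hD.open_subset_closure_inter hU).trans
    (closure_mono (inter_subset_inter_left D subset_closure))) isClosed_closure

theorem exists_countable_image_subset_closure_image {X Y : Type*} [TopologicalSpace Y] (f : X → Y)
    [SecondCountableTopology (range f)] (A : Set X) :
    ∃ C ⊆ A, C.Countable ∧ f '' A ⊆ closure (f '' C) := by
  let g : A → range f := fun a => ⟨f a, mem_range_self _⟩
  let _ : TopologicalSpace A := .induced g inferInstance
  have : SecondCountableTopology A := secondCountableTopology_induced A (range f) g
  have hg : IsInducing (Subtype.val ∘ g) := IsInducing.subtypeVal.comp (.induced g)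
  obtain ⟨d, hd_countable, hd_dense⟩ := exists_countable_dense A
  refine ⟨Subtype.val '' d, Subtype.coe_image_subset A d, hd_countable.image _, ?_⟩
  rintro _ ⟨x, hx, rfl⟩
  have hxd : (⟨x, hx⟩ : A) ∈ closure d := hd_dense _
  rw [hg.closure_eq_preimage_closure_image] at hxd
  rwa [image_image]

namespace RetractionalSkeleton

attribute [local instance] RetractionalSkeleton.po RetractionalSkeleton.ne

variable {K : Type u} [TopologicalSpace K] (𝔰 : RetractionalSkeleton K)

theorem mem_range_iff {s : 𝔰.Γ} {x : K} : x ∈ range (𝔰.r s) ↔ 𝔰.r s x = x :=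
  ⟨by rintro ⟨y, rfl⟩; exact 𝔰.isRetraction s y, fun h => ⟨x, h⟩⟩

theorem monotone_range : Monotone fun s : 𝔰.Γ => range (𝔰.r s) := by
  rintro s t hst _ ⟨y, rfl⟩
  exact ⟨𝔰.r s y, (𝔰.comp_eq_of_le s t hst y).2⟩

theorem apply_eq_of_le {s t : 𝔰.Γ} (hst : s ≤ t) {x y : K} (h : 𝔰.r t x = 𝔰.r t y) :
    𝔰.r s x = 𝔰.r s y := by
  rw [← (𝔰.comp_eq_of_le s t hst x).1, h, (𝔰.comp_eq_of_le s t hst y).1]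

theorem dense_inducedSet : Dense 𝔰.inducedSet := by
  have : IsDirectedOrder 𝔰.Γ := ⟨𝔰.directed⟩
  exact fun x => mem_closure_of_tendsto (𝔰.tendsto_id x)
    (.of_forall fun s => mem_iUnion_of_mem s (mem_range_self x))

section Restrict

theorem tendsto_id_of_cofinal {p : 𝔰.Γ → Prop} (hp : ∀ s, ∃ t, s ≤ t ∧ p t) (x : K) :
    Tendsto (fun t : {t // p t} => 𝔰.r t x) atTop (𝓝 x) := by
  refine (𝔰.tendsto_id x).comp (tendsto_atTop.2 fun s => ?_)
  obtain ⟨t, hst, ht⟩ := hp s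
  filter_upwards [eventually_ge_atTop (⟨t, ht⟩ : {t // p t})] with a ha
  exact hst.trans ha

variable {G : Set K} (hG : IsClosed G) (hcof : ∀ s, ∃ t, s ≤ t ∧ MapsTo (𝔰.r t) G G)

/-- The skeleton in a closed set `G` formed by the restrictions of those `r t` that map `G` into
itself, provided such `t` are cofinal. -/
def restrict : RetractionalSkeleton G where
  Γ := {t : 𝔰.Γ // MapsTo (𝔰.r t) G G}
  po := inferInstance
  ne := let ⟨t, _, ht⟩ := hcof (Classical.arbitrary 𝔰.Γ); ⟨⟨t, ht⟩⟩
  directed := fun s t => by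
    obtain ⟨w, hsw, htw⟩ := 𝔰.directed s t
    obtain ⟨w', hww', hw'⟩ := hcof w
    exact ⟨⟨w', hw'⟩, hsw.trans hww', htw.trans hww'⟩
  r := fun t => ⟨t.2.restrict, (𝔰.r t).continuous.restrict t.2⟩
  isRetraction := fun s x => Subtype.ext (𝔰.isRetraction s x)
  metrizable := fun s => by
    have := 𝔰.metrizable s
    refine ((IsEmbedding.subtypeVal.comp IsEmbedding.subtypeVal).codRestrict
      (range (𝔰.r s)) ?_).metrizableSpace
    rintro ⟨_, x, rfl⟩
    exact mem_range_self x.1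
  tendsto_id := fun x => tendsto_subtype_rng.2 (𝔰.tendsto_id_of_cofinal hcof x)
  comp_eq_of_le := fun s t hst x =>
    ⟨Subtype.ext (𝔰.comp_eq_of_le s t hst x).1, Subtype.ext (𝔰.comp_eq_of_le s t hst x).2⟩
  sup_seq := fun f hf => by
    obtain ⟨t, ht, hlim⟩ := 𝔰.sup_seq (fun n => (f n).1) hf
    have htG : MapsTo (𝔰.r t) G G := fun x hx =>
      hG.mem_of_tendsto (hlim x) (.of_forall fun n => (f n).2 hx)
    refine ⟨⟨t, htG⟩, ⟨?_, fun b hb => ht.2 ?_⟩, fun x => tendsto_subtype_rng.2 (hlim x)⟩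
    · exact forall_mem_range.2 fun n => ht.1 (mem_range_self n)
    · exact forall_mem_range.2 fun n => hb (mem_range_self n)

theorem inducedSet_restrict :
    (𝔰.restrict hG hcof).inducedSet = Subtype.val ⁻¹' 𝔰.inducedSet := by
  ext x
  constructor
  · intro hx
    obtain ⟨t, y, rfl⟩ := mem_iUnion.1 hx
    exact mem_iUnion_of_mem t.1 (mem_range_self y.1)
  · intro hx
    obtain ⟨s, hs⟩ := mem_iUnion.1 hx
    obtain ⟨t, hst, ht⟩ := hcof s
    exact mem_iUnion_of_mem ⟨t, ht⟩
      ⟨x, Subtype.ext (𝔰.mem_range_iff.1 (𝔰.monotone_range hst hs))⟩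

end Restrict

section Suprema

variable [T2Space K]

theorem exists_isLUB_of_monotone {f : ℕ → 𝔰.Γ} (hf : Monotone f) :
    ∃ t, IsLUB (range f) t ∧ ∀ x y, (∀ n, 𝔰.r (f n) x = 𝔰.r (f n) y) → 𝔰.r t x = 𝔰.r t y := by
  -- Either `f` is eventually constant, or it has a cofinal strictly increasing subsequence.
  by_cases hmax : ∃ N, ∀ n, ¬ f N < f n
  · obtain ⟨N, hN⟩ := hmax
    have hle (n : ℕ) : f n ≤ f N := by
      have hNn := (hf (le_max_left N n)).eq_of_not_lt (hN _)
      exact hNn ▸ hf (le_max_right N n)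
    exact ⟨f N, IsGreatest.isLUB ⟨mem_range_self N, forall_mem_range.2 hle⟩, fun x y h => h N⟩
  · push Not at hmax
    choose next hnext using hmax
    let φ : ℕ → ℕ := fun k => next^[k] 0
    have hfφ : StrictMono (f ∘ φ) := strictMono_nat_of_lt_succ fun k => by
      simpa only [Function.comp_apply, φ, Function.iterate_succ_apply'] using hnext (φ k)
    have hφ : StrictMono φ := fun _ _ hab => hf.reflect_lt (hfφ hab)
    obtain ⟨t, ht, hlim⟩ := 𝔰.sup_seq (f ∘ φ) hfφ
    refine ⟨t, ⟨forall_mem_range.2 fun n => ?_, fun b hb => ht.2 ?_⟩, fun x y h => ?_⟩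
    · exact (hf hφ.le_apply).trans (ht.1 (mem_range_self n))
    · exact forall_mem_range.2 fun k => hb (mem_range_self (φ k))
    · exact tendsto_nhds_unique (hlim x) ((hlim y).congr fun k => (h (φ k)).symm)

theorem bddAbove_range {ι : Type*} [Countable ι] (g : ι → 𝔰.Γ) : BddAbove (range g) := by
  rcases isEmpty_or_nonempty ι with _ | _
  · simp only [range_eq_empty, bddAbove_empty]
  obtain ⟨e, he⟩ := exists_surjective_nat ι
  choose ub hub_left hub_right using 𝔰.directed
  let f : ℕ → 𝔰.Γ := Nat.rec (g (e 0)) fun n s => ub s (g (e n))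
  have hf : Monotone f := monotone_nat_of_le_succ fun n => hub_left (f n) (g (e n))
  obtain ⟨t, ht, -⟩ := 𝔰.exists_isLUB_of_monotone hf
  refine ⟨t, forall_mem_range.2 (he.forall.2 fun n => ?_)⟩
  exact (hub_right (f n) (g (e n))).trans (ht.1 (mem_range_self (n + 1)))

theorem exists_subset_range_of_countable {C : Set K} (hC : C.Countable)
    (hCD : C ⊆ 𝔰.inducedSet) : ∃ s, C ⊆ range (𝔰.r s) := by
  have := hC.to_subtype
  choose index hindex using fun x : C => mem_iUnion.1 (hCD x.2)
  obtain ⟨s, hs⟩ := 𝔰.bddAbove_range index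
  exact ⟨s, fun x hx => 𝔰.monotone_range (hs (mem_range_self ⟨x, hx⟩)) (hindex ⟨x, hx⟩)⟩

end Suprema

section Invariance

variable [CompactSpace K]

theorem secondCountableTopology_range (s : 𝔰.Γ) : SecondCountableTopology (range (𝔰.r s)) := by
  have := 𝔰.metrizable s
  have := isCompact_iff_compactSpace.1 (isCompact_range (𝔰.r s).continuous)
  let _ := metrizableSpaceMetric (range (𝔰.r s))
  infer_instance

variable [T2Space K]

theorem isClosed_range (s : 𝔰.Γ) : IsClosed (range (𝔰.r s)) :=
  (isCompact_range (𝔰.r s).continuous).isClosed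

theorem exists_ge_image_subset_image_inter_range {ι : Type*} [Countable ι] {F : ι → Set K}
    (hF : ∀ i, IsClosed (F i)) (hFD : ∀ i, F i ⊆ closure (F i ∩ 𝔰.inducedSet)) (s : 𝔰.Γ) :
    ∃ s', s ≤ s' ∧ ∀ i, 𝔰.r s '' F i ⊆ 𝔰.r s '' (F i ∩ range (𝔰.r s')) := by
  have := 𝔰.secondCountableTopology_range s
  choose C hCsub hC_countable hC_dense using fun i =>
    exists_countable_image_subset_closure_image (𝔰.r s) (F i ∩ 𝔰.inducedSet)
  obtain ⟨u, hu⟩ := 𝔰.exists_subset_range_of_countable (countable_iUnion hC_countable)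
    (iUnion_subset fun i => (hCsub i).trans inter_subset_right)
  obtain ⟨s', hss', hus'⟩ := 𝔰.directed s u
  refine ⟨s', hss', fun i => ?_⟩
  have hCs' : C i ⊆ F i ∩ range (𝔰.r s') := subset_inter ((hCsub i).trans inter_subset_left)
    ((subset_iUnion C i).trans (hu.trans (𝔰.monotone_range hus')))
  have hclosed : IsClosed (𝔰.r s '' (F i ∩ range (𝔰.r s'))) :=
    (𝔰.r s).continuous.isClosedMap _ ((hF i).inter (𝔰.isClosed_range s'))
  calc 𝔰.r s '' F i ⊆ 𝔰.r s '' closure (F i ∩ 𝔰.inducedSet) := image_mono (hFD i)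
    _ ⊆ closure (𝔰.r s '' (F i ∩ 𝔰.inducedSet)) :=
        image_closure_subset_closure_image (𝔰.r s).continuous
    _ ⊆ closure (𝔰.r s '' C i) := closure_minimal (hC_dense i) isClosed_closure
    _ ⊆ 𝔰.r s '' (F i ∩ range (𝔰.r s')) := closure_minimal (image_mono hCs') hclosed

theorem mapsTo_of_image_subset_image_inter_range {f : ℕ → 𝔰.Γ} (hf : Monotone f) {t : 𝔰.Γ}
    (ht : ∀ x y, (∀ n, 𝔰.r (f n) x = 𝔰.r (f n) y) → 𝔰.r t x = 𝔰.r t y) {F : Set K}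
    (hF : IsClosed F) (hFt : ∀ n, 𝔰.r (f n) '' F ⊆ 𝔰.r (f n) '' (F ∩ range (𝔰.r t))) :
    MapsTo (𝔰.r t) F F := by
  intro x hx
  let S : ℕ → Set K := fun n => (F ∩ range (𝔰.r t)) ∩ {y | 𝔰.r (f n) y = 𝔰.r (f n) x}
  have hS_closed (n : ℕ) : IsClosed (S n) :=
    (hF.inter (𝔰.isClosed_range t)).inter (isClosed_eq (𝔰.r (f n)).continuous continuous_const)
  have hS_anti (n : ℕ) : S (n + 1) ⊆ S n :=
    inter_subset_inter_right _ fun y => 𝔰.apply_eq_of_le (hf n.le_succ)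
  have hS_nonempty (n : ℕ) : (S n).Nonempty :=
    let ⟨y, hy, hyx⟩ := hFt n (mem_image_of_mem _ hx)
    ⟨y, hy, hyx⟩
  obtain ⟨y, hy⟩ := IsCompact.nonempty_iInter_of_sequence_nonempty_isCompact_isClosed S hS_anti
    hS_nonempty (hS_closed 0).isCompact hS_closed
  have hyS (n : ℕ) : y ∈ S n := mem_iInter.1 hy n
  obtain ⟨hyF, hyt⟩ := (hyS 0).1
  have hxy : 𝔰.r t x = y :=
    (ht x y fun n => (hyS n).2.symm).trans (𝔰.mem_range_iff.1 hyt)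
  exact hxy ▸ hyF

theorem exists_ge_mapsTo_iInter {ι : Type*} [Countable ι] {F : ι → Set K}
    (hF : ∀ i, IsClosed (F i)) (hFD : ∀ i, F i ⊆ closure (F i ∩ 𝔰.inducedSet)) (s : 𝔰.Γ) :
    ∃ t, s ≤ t ∧ MapsTo (𝔰.r t) (⋂ i, F i) (⋂ i, F i) := by
  choose next hle hnext using 𝔰.exists_ge_image_subset_image_inter_range hF hFD
  let f : ℕ → 𝔰.Γ := fun n => next^[n] s
  have hf_succ (n : ℕ) : f (n + 1) = next (f n) := Function.iterate_succ_apply' next n s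
  have hf : Monotone f := monotone_nat_of_le_succ fun n => (hle (f n)).trans_eq (hf_succ n).symm
  obtain ⟨t, ht, hft⟩ := 𝔰.exists_isLUB_of_monotone hf
  refine ⟨t, ht.1 (mem_range_self 0), mapsTo_iInter_iInter fun i => ?_⟩
  refine 𝔰.mapsTo_of_image_subset_image_inter_range hf hft (hF i) fun n => ?_
  have hnt : next (f n) ≤ t := hf_succ n ▸ ht.1 (mem_range_self (n + 1))
  exact (hnext (f n) i).trans (image_mono (inter_subset_inter_right _ (𝔰.monotone_range hnt)))

end Invariance

end RetractionalSkeleton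

theorem IsInducedByRSkeleton.dense {K : Type u} [TopologicalSpace K] {D : Set K}
    (hD : IsInducedByRSkeleton D) : Dense D := by
  obtain ⟨𝔰, rfl⟩ := hD
  exact 𝔰.dense_inducedSet

theorem inducedByRSkeleton_inter_iInter_closure_general {K : Type u} [TopologicalSpace K]
    [CompactSpace K] [T2Space K] {ι : Type*} [Countable ι] {F : ι → Set K}
    (hF : ∀ i, IsClosed (F i)) {D : Set K} (hFD : ∀ i, F i ⊆ closure (F i ∩ D))
    (hD : IsInducedByRSkeleton D) :
    (⋂ i, F i) ⊆ closure ((⋂ i, F i) ∩ D) ∧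
      IsInducedByRSkeleton (Subtype.val ⁻¹' D : Set ↥(⋂ i, F i)) := by
  obtain ⟨𝔰, rfl⟩ := hD
  have hind : IsInducedByRSkeleton (Subtype.val ⁻¹' 𝔰.inducedSet : Set ↥(⋂ i, F i)) :=
    ⟨_, 𝔰.inducedSet_restrict (isClosed_iInter hF) (𝔰.exists_ge_mapsTo_iInter hF hFD)⟩
  refine ⟨?_, hind⟩
  simpa only [Subtype.image_preimage_coe] using Subtype.dense_iff.1 hind.dense

/-- Let `G = ⋂ n, closure (U n)` with each `U n` open in a compact Hausdorff space `K`.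
If `D` is induced by an r-skeleton in `K`, then `G ∩ D` is dense in `G`, and consequently
`G ∩ D` is induced by an r-skeleton in the compact space `G`. -/
theorem inducedByRSkeleton_inter_iInter_closure (K : Type u) [TopologicalSpace K]
    [CompactSpace K] [T2Space K] (U : ℕ → Set K) (hU : ∀ n, IsOpen (U n))
    (D : Set K) (hD : IsInducedByRSkeleton D) :
    (⋂ n, closure (U n)) ⊆ closure ((⋂ n, closure (U n)) ∩ D) ∧
      IsInducedByRSkeleton (Subtype.val ⁻¹' D : Set ↥(⋂ n, closure (U n))) := by
  exact inducedByRSkeleton_inter_iInter_closure_general (fun n => isClosed_closure)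
    (fun n => closure_subset_closure_inter_of_isOpen_of_dense (hU n) hD.dense) hD
end

section
/- Let K be a compact Hausdorff space such that P(K) has a retractional skeleton. If G denotes the set of all Gδ points of K, then the closure of G in K has a retractional skeleton. -/
/-!
Evaluation `x ↦ δ_x` embeds `K` into `P(K)`. If `{x}` is Gδ in `K`, some continuous `f ≥ 0`
vanishes exactly at `x`, and `δ_x` is then the only `φ ∈ P(K)` with `φ f = 0`; so `δ_x` is a Gδ
point of `P(K)`. Countably many indices of a skeleton have a common upper bound, so every Gδ point
lies in the set `D` induced by the skeleton. Hence `D` is dense in the copy of the closure of the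
Gδ points, and it remains to see that a skeleton restricts to every compact set `F` with `F ∩ D`
dense in `F`.

The indices `t` with `r t [F] ⊆ F` are closed under suprema of increasing sequences. They are also
cofinal: choose an increasing sequence `s n` such that every `r (s n) x` with `x ∈ F` equals
`r (s n) y` for some `y ∈ F` fixed by `r (s (n + 1))`. If `t = sup s n` and `x ∈ F`, compactness
provides one `y ∈ F`, fixed by `r t`, which works for all `n` at once, so `r t x = r t y = y ∈ F`.
-/

open Filter Topology TopologicalSpace Set

universe u v

/-- The space `P(K)` of Radon probability measures on a compact space `K`, identified via the
Riesz representation theorem with the set of positive normalized functionals in the weak*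
dual of `C(K, ℝ)`; the subspace topology is the w*-topology. -/
def probMeasuresSet (K : Type u) [TopologicalSpace K] [CompactSpace K] :
    Set (WeakDual ℝ C(K, ℝ)) :=
  {φ | φ 1 = 1 ∧ ∀ f : C(K, ℝ), (∀ x, 0 ≤ f x) → 0 ≤ φ f}

lemma exists_monotone_forall_le {α : Type*} [Preorder α] [IsDirectedOrder α] (g : ℕ → α) :
    ∃ f : ℕ → α, Monotone f ∧ ∀ n, g n ≤ f n := by
  choose w hw hw' using fun a b : α => exists_ge_ge a b
  let f : ℕ → α := fun n => Nat.rec (g 0) (fun n a => w a (g (n + 1))) n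
  refine ⟨f, monotone_nat_of_le_succ fun n => hw _ _, fun n => ?_⟩
  cases n with
  | zero => exact le_rfl
  | succ n => exact hw' _ _

lemma countableInterFilter_atTop_of_bddAbove {α : Type*} [Preorder α] [IsDirectedOrder α]
    [Nonempty α] (h : ∀ S : Set α, S.Countable → BddAbove S) :
    CountableInterFilter (atTop : Filter α) := by
  refine ⟨fun 𝒮 h𝒮 hmem => ?_⟩
  choose! g hg using fun S hS => mem_atTop_sets.1 (hmem S hS)
  obtain ⟨t, ht⟩ := h (g '' 𝒮) (h𝒮.image g)
  exact mem_atTop_sets.2 ⟨t, fun b hb S hS => hg S hS b ((ht (mem_image_of_mem g hS)).trans hb)⟩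

lemma tendsto_subtypeVal_atTop_of_isCofinal {α : Type*} [Preorder α] {I : Set α}
    (hI : IsCofinal I) : Tendsto (Subtype.val : I → α) atTop atTop :=
  tendsto_atTop.2 fun a =>
    let ⟨b, hb, hab⟩ := hI a
    (eventually_ge_atTop (⟨b, hb⟩ : I)).mono fun _ hc => hab.trans hc

lemma eventually_eq_of_tendsto_of_isGδ {ι X : Type*} [TopologicalSpace X] {l : Filter ι}
    [CountableInterFilter l] {u : ι → X} {x : X} (hu : Tendsto u l (𝓝 x))
    (hx : IsGδ ({x} : Set X)) : ∀ᶠ i in l, u i = x := by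
  obtain ⟨U, hU, hxU⟩ := hx.eq_iInter_nat
  have hmem : ∀ n, x ∈ U n := mem_iInter.1 (hxU ▸ mem_singleton x)
  filter_upwards [eventually_countable_forall.2 fun n => hu ((hU n).mem_nhds (hmem n))] with i hi
  exact hxU.ge (mem_iInter.2 hi)

lemma exists_countable_subset_image_subset_closure {X M : Type*} [TopologicalSpace M]
    [PseudoMetrizableSpace M] {f : X → M} {D : Set X} (h : IsSeparable (f '' D)) :
    ∃ A ⊆ D, A.Countable ∧ f '' D ⊆ closure (f '' A) := by
  let := pseudoMetrizableSpacePseudoMetric M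
  obtain ⟨T, hTD, hT, hDT⟩ := h.exists_countable_dense_subset
  obtain ⟨A, hAD, hA⟩ := SurjOn.exists_bijOn_subset hTD
  rw [← hA.image_eq] at hT hDT
  exact ⟨A, hAD, countable_of_injective_of_countable_image hA.injOn hT, hDT⟩

section ComapSelfMap

variable {L X : Type*} [TopologicalSpace L] [TopologicalSpace X] {e : L → X}

/-- The map induced on `L` by a continuous self-map `g` of `X` that leaves the range of the
embedding `e : L → X` invariant. -/
noncomputable def comapSelfMap (he : IsEmbedding e) (g : C(X, X))
    (hg : MapsTo g (range e) (range e)) : C(L, L) where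
  toFun l := he.toHomeomorph.symm ⟨g (e l), hg (mem_range_self l)⟩
  continuous_toFun := he.toHomeomorph.symm.continuous.comp
    ((g.continuous.comp he.continuous).subtype_mk _)

lemma apply_comapSelfMap (he : IsEmbedding e) (g : C(X, X)) (hg : MapsTo g (range e) (range e))
    (l : L) : e (comapSelfMap he g hg l) = g (e l) :=
  congrArg Subtype.val (he.toHomeomorph.apply_symm_apply ⟨g (e l), hg (mem_range_self l)⟩)

end ComapSelfMap

namespace RetractionalSkeleton

variable {X : Type u} [TopologicalSpace X] (𝔰 : RetractionalSkeleton X)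

attribute [instance] po ne

instance : IsDirectedOrder 𝔰.Γ := ⟨𝔰.directed⟩

/-- A monotone sequence either has a strictly increasing subsequence or is eventually constant. -/
lemma exists_isLUB_tendsto_subseq {f : ℕ → 𝔰.Γ} (hf : Monotone f) :
    ∃ t, IsLUB (range f) t ∧ ∃ φ : ℕ → ℕ, StrictMono φ ∧
      ∀ x, Tendsto (fun n => 𝔰.r (f (φ n)) x) atTop (𝓝 (𝔰.r t x)) := by
  obtain ⟨φ, hφ⟩ := exists_increasing_or_nonincreasing_subseq (· < ·) f
  suffices ∃ t, IsLUB (range (f ∘ φ)) t ∧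
      ∀ x, Tendsto (fun n => 𝔰.r (f (φ n)) x) atTop (𝓝 (𝔰.r t x)) by
    obtain ⟨t, ht, hlim⟩ := this
    rw [IsLUB, hf.upperBounds_range_comp_tendsto_atTop φ.strictMono.tendsto_atTop] at ht
    exact ⟨t, ht, φ, φ.strictMono, hlim⟩
  rcases hφ with hlt | hnlt
  · exact 𝔰.sup_seq (f ∘ φ) hlt
  · have hconst : ∀ n, f (φ n) = f (φ 0) := fun n =>
      n.eq_zero_or_pos.elim (fun h => h ▸ rfl) fun h =>
        ((hf (φ.monotone h.le)).eq_of_not_lt (hnlt 0 n h)).symm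
    refine ⟨f (φ 0), ?_, fun x => ?_⟩
    · simp [Function.comp_def, hconst]
    · simp [hconst, tendsto_const_nhds]

lemma bddAbove_of_countable {S : Set 𝔰.Γ} (hS : S.Countable) : BddAbove S := by
  rcases S.eq_empty_or_nonempty with rfl | hne
  · exact bddAbove_empty
  obtain ⟨g, rfl⟩ := hS.exists_eq_range hne
  obtain ⟨f, hf, hgf⟩ := exists_monotone_forall_le g
  obtain ⟨t, ht, -⟩ := 𝔰.exists_isLUB_tendsto_subseq hf
  exact ⟨t, forall_mem_range.2 fun n => (hgf n).trans (ht.1 (mem_range_self n))⟩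

instance : CountableInterFilter (atTop : Filter 𝔰.Γ) :=
  countableInterFilter_atTop_of_bddAbove fun _ => 𝔰.bddAbove_of_countable

variable {𝔰} in
lemma r_eq_self_of_le {s t : 𝔰.Γ} (hst : s ≤ t) {x : X} (hx : 𝔰.r s x = x) : 𝔰.r t x = x := by
  simpa only [hx] using (𝔰.comp_eq_of_le s t hst x).2

variable {𝔰} in
lemma r_eq_r_of_le {s t : 𝔰.Γ} (hst : s ≤ t) {x y : X} (h : 𝔰.r t x = 𝔰.r t y) :
    𝔰.r s x = 𝔰.r s y := by
  rw [← (𝔰.comp_eq_of_le s t hst x).1, h, (𝔰.comp_eq_of_le s t hst y).1]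

lemma mem_inducedSet_iff_eventually {x : X} :
    x ∈ 𝔰.inducedSet ↔ ∀ᶠ s in atTop, 𝔰.r s x = x := by
  simp only [inducedSet, mem_iUnion, mem_range]
  constructor
  · rintro ⟨s, y, rfl⟩
    exact (eventually_ge_atTop s).mono fun t hst => r_eq_self_of_le hst (𝔰.isRetraction s y)
  · exact fun h => h.exists.imp fun s hs => ⟨x, hs⟩

lemma mem_inducedSet_of_isGδ {x : X} (hx : IsGδ ({x} : Set X)) : x ∈ 𝔰.inducedSet :=
  𝔰.mem_inducedSet_iff_eventually.2 (eventually_eq_of_tendsto_of_isGδ (𝔰.tendsto_id x) hx)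

section Restriction

/-- Since `r s [F]` is compact and metrizable, it is the closure of `r s [A]` for a countable
`A ⊆ F ∩ D`, and some `r t` fixes all of `A`. -/
lemma exists_ge_forall_exists_fixed [T2Space X] {F : Set X} (hF : IsCompact F)
    (hD : F ⊆ closure (F ∩ 𝔰.inducedSet)) (s : 𝔰.Γ) :
    ∃ t, s ≤ t ∧ ∀ x ∈ F, ∃ y ∈ F, 𝔰.r t y = y ∧ 𝔰.r s y = 𝔰.r s x := by
  have := 𝔰.metrizable s
  let := metrizableSpaceMetric (range (𝔰.r s))
  let q : X → range (𝔰.r s) := rangeFactorization (𝔰.r s)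
  have hq : Continuous q := (𝔰.r s).continuous.rangeFactorization
  have hsep : IsSeparable (q '' (F ∩ 𝔰.inducedSet)) :=
    (hF.image hq).isSeparable.mono (image_mono inter_subset_left)
  obtain ⟨A, hAD, hA, hDA⟩ := exists_countable_subset_image_subset_closure hsep
  have hfix : ∀ᶠ t in atTop, ∀ a ∈ A, 𝔰.r t a = a :=
    (eventually_countable_ball hA).2 fun a ha => 𝔰.mem_inducedSet_iff_eventually.1 (hAD ha).2
  obtain ⟨t, hst, ht⟩ := ((eventually_ge_atTop s).and hfix).exists
  let E : Set X := F ∩ {y | 𝔰.r t y = y}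
  have hE : IsCompact E := hF.inter_right (isClosed_eq (𝔰.r t).continuous continuous_id)
  have hFE : q '' F ⊆ q '' E := calc
    q '' F ⊆ closure (q '' (F ∩ 𝔰.inducedSet)) :=
      (image_mono hD).trans (image_closure_subset_closure_image hq)
    _ ⊆ closure (q '' A) := closure_minimal hDA isClosed_closure
    _ ⊆ q '' E := closure_minimal (image_mono fun a ha => ⟨(hAD ha).1, ht a ha⟩)
      (hE.image hq).isClosed
  refine ⟨t, hst, fun x hx => ?_⟩
  obtain ⟨y, ⟨hyF, hy⟩, hyx⟩ := hFE (mem_image_of_mem q hx)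
  exact ⟨y, hyF, hy, congrArg Subtype.val hyx⟩

lemma isCofinal_setOf_mapsTo [T2Space X] {F : Set X} (hF : IsCompact F)
    (hD : F ⊆ closure (F ∩ 𝔰.inducedSet)) : IsCofinal {t | MapsTo (𝔰.r t) F F} := by
  intro s₀
  choose next hle hnext using 𝔰.exists_ge_forall_exists_fixed hF hD
  let f : ℕ → 𝔰.Γ := fun n => next^[n] s₀
  have hf_succ : ∀ n, f (n + 1) = next (f n) := fun n => Function.iterate_succ_apply' next n s₀
  have hf : Monotone f := monotone_nat_of_le_succ fun n => hf_succ n ▸ hle (f n)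
  obtain ⟨t, ht, φ, -, hlim⟩ := 𝔰.exists_isLUB_tendsto_subseq hf
  have hft : ∀ n, f n ≤ t := fun n => ht.1 (mem_range_self n)
  refine ⟨t, fun x hx => ?_, hft 0⟩
  let Z : ℕ → Set X := fun n => F ∩ {y | 𝔰.r t y = y ∧ 𝔰.r (f n) y = 𝔰.r (f n) x}
  have hZ : ∀ n, IsCompact (Z n) := fun n => hF.inter_right <|
    (isClosed_eq (𝔰.r t).continuous continuous_id).inter
      (isClosed_eq (𝔰.r (f n)).continuous continuous_const)
  have hZ_anti : ∀ n, Z (n + 1) ⊆ Z n := fun n y ⟨hyF, hyt, hy⟩ =>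
    ⟨hyF, hyt, r_eq_r_of_le (hf n.le_succ) hy⟩
  have hZ_nonempty : ∀ n, (Z n).Nonempty := fun n =>
    let ⟨y, hyF, hy, hyx⟩ := hnext (f n) x hx
    ⟨y, hyF, r_eq_self_of_le (hf_succ n ▸ hft (n + 1)) hy, hyx⟩
  obtain ⟨y, hy⟩ := IsCompact.nonempty_iInter_of_sequence_nonempty_isCompact_isClosed Z hZ_anti
    hZ_nonempty (hZ 0) fun n => (hZ n).isClosed
  rw [mem_iInter] at hy
  have hxy : 𝔰.r t x = y := calc
    𝔰.r t x = 𝔰.r t y := tendsto_nhds_unique (hlim x) <|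
      (hlim y).congr fun n => (hy (φ n)).2.2
    _ = y := (hy 0).2.1
  exact hxy ▸ (hy 0).1

variable {𝔰} in
lemma mapsTo_of_isLUB {F : Set X} (hF : IsClosed F) {f : ℕ → 𝔰.Γ} (hf : StrictMono f)
    (hfF : ∀ n, MapsTo (𝔰.r (f n)) F F) {t : 𝔰.Γ} (ht : IsLUB (range f) t) :
    MapsTo (𝔰.r t) F F := by
  obtain ⟨t', ht', hlim⟩ := 𝔰.sup_seq f hf
  obtain rfl := ht.unique ht'
  exact fun x hx => hF.mem_of_tendsto (hlim x) (.of_forall fun n => hfF n hx)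

/-- The skeleton formed by the retractions whose index lies in a cofinal set `I` closed under
suprema of strictly increasing sequences. -/
def restrictIndices (I : Set 𝔰.Γ) (hI : IsCofinal I)
    (hsup : ∀ f : ℕ → 𝔰.Γ, StrictMono f → (∀ n, f n ∈ I) → ∀ t, IsLUB (range f) t → t ∈ I) :
    RetractionalSkeleton X where
  Γ := I
  ne := hI.nonempty.to_subtype
  directed s t :=
    let ⟨w, hsw, htw⟩ := 𝔰.directed s t
    let ⟨w', hw', hww'⟩ := hI w
    ⟨⟨w', hw'⟩, hsw.trans hww', htw.trans hww'⟩
  r s := 𝔰.r s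
  isRetraction s := 𝔰.isRetraction s
  metrizable s := 𝔰.metrizable s
  tendsto_id x := (𝔰.tendsto_id x).comp (tendsto_subtypeVal_atTop_of_isCofinal hI)
  comp_eq_of_le s t := 𝔰.comp_eq_of_le s t
  sup_seq f hf := by
    obtain ⟨t, ht, hlim⟩ := 𝔰.sup_seq (fun n => (f n : 𝔰.Γ)) hf
    have htI : t ∈ I := hsup _ hf (fun n => (f n).2) t ht
    have hlub : IsLUB (range f) ⟨t, htI⟩ :=
      ⟨forall_mem_range.2 fun n => ht.1 (mem_range_self n), fun u hu =>
        ht.2 (forall_mem_range.2 fun n => hu (mem_range_self n))⟩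
    exact ⟨⟨t, htI⟩, hlub, hlim⟩

variable {L : Type u} [TopologicalSpace L] {e : L → X}

/-- The skeleton induced on `L` by a skeleton in `X` all of whose retractions leave the range of
the embedding `e : L → X` invariant. -/
noncomputable def comap (he : IsEmbedding e) (hinv : ∀ s, MapsTo (𝔰.r s) (range e) (range e)) :
    RetractionalSkeleton L where
  Γ := 𝔰.Γ
  directed := 𝔰.directed
  r s := comapSelfMap he (𝔰.r s) (hinv s)
  isRetraction s l := he.injective <| by simp only [apply_comapSelfMap, 𝔰.isRetraction]
  metrizable s := by
    have := 𝔰.metrizable s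
    have hmaps : MapsTo e (range (comapSelfMap he (𝔰.r s) (hinv s))) (range (𝔰.r s)) :=
      forall_mem_range.2 fun l => ⟨e l, (apply_comapSelfMap he _ _ l).symm⟩
    exact (he.restrict hmaps).metrizableSpace
  tendsto_id l := he.tendsto_nhds_iff.2 <| by
    simpa only [Function.comp_def, apply_comapSelfMap] using 𝔰.tendsto_id (e l)
  comp_eq_of_le s t hst l := by
    simp only [← he.injective.eq_iff, apply_comapSelfMap]
    exact 𝔰.comp_eq_of_le s t hst (e l)
  sup_seq f hf := by
    obtain ⟨t, ht, hlim⟩ := 𝔰.sup_seq f hf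
    refine ⟨t, ht, fun l => he.tendsto_nhds_iff.2 ?_⟩
    simpa only [Function.comp_def, apply_comapSelfMap] using hlim (e l)

theorem hasRetractionalSkeleton_of_dense_preimage [T2Space X] [CompactSpace L]
    (he : IsEmbedding e) (hd : Dense (e ⁻¹' 𝔰.inducedSet)) : HasRetractionalSkeleton L := by
  have hcompact : IsCompact (range e) := isCompact_range he.continuous
  have hdense : range e ⊆ closure (range e ∩ 𝔰.inducedSet) := by
    rw [inter_comm, ← image_preimage_eq_inter_range]
    exact he.continuous.range_subset_closure_image_dense hd
  let 𝔱 := 𝔰.restrictIndices {t | MapsTo (𝔰.r t) (range e) (range e)}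
    (𝔰.isCofinal_setOf_mapsTo hcompact hdense)
    fun f hf hfF t ht => mapsTo_of_isLUB hcompact.isClosed hf hfF ht
  exact ⟨𝔱.comap he fun s => s.2⟩

end Restriction

end RetractionalSkeleton

section Dirac

variable {K : Type*} [TopologicalSpace K] [CompactSpace K]

lemma exists_nat_forall_lt_add_mul {f h : C(K, ℝ)} (hf : 0 ≤ f) (hfh : ∀ y, f y = 0 → h y ≤ 0)
    {ε : ℝ} (hε : 0 < ε) : ∃ n : ℕ, ∀ y, h y < ε + n * f y := by
  let U : ℕ → Set K := fun n => {y | h y < ε + n * f y}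
  have hU : ∀ n, IsOpen (U n) := fun n => isOpen_lt (by fun_prop) (by fun_prop)
  have hU_mono : Monotone U := fun m n hmn y (hy : h y < ε + m * f y) => by
    have := hf y
    exact hy.trans_le (by gcongr)
  have hU_cover : univ ⊆ ⋃ n, U n := fun y _ => mem_iUnion.2 <| by
    rcases (hf y).eq_or_lt with hy | hy
    · exact ⟨0, by simpa [U] using (hfh y hy.symm).trans_lt hε⟩
    · obtain ⟨n, hn⟩ := exists_lt_nsmul hy (h y)
      exact ⟨n, by rw [nsmul_eq_mul] at hn; exact hn.trans (lt_add_of_pos_left _ hε)⟩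
  obtain ⟨n, hn⟩ := isCompact_univ.elim_directed_cover U hU hU_cover hU_mono.directed_le
  exact ⟨n, fun y => hn (mem_univ y)⟩

lemma map_nonpos_of_nonpos_on_zeros (φ : C(K, ℝ) →ₚ[ℝ] ℝ) {f h : C(K, ℝ)} (hf : 0 ≤ f)
    (hfh : ∀ y, f y = 0 → h y ≤ 0) (hφ : φ f = 0) : φ h ≤ 0 := by
  have hle : ∀ ε > 0, φ h ≤ ε * φ 1 := fun ε hε => by
    obtain ⟨n, hn⟩ := exists_nat_forall_lt_add_mul hf hfh hε
    calc φ h ≤ φ (ε • 1 + (n : ℝ) • f) :=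
          OrderHomClass.mono φ fun y => by simpa using (hn y).le
      _ = ε * φ 1 := by simp [hφ]
  have hlim : Tendsto (fun ε : ℝ => ε * φ 1) (𝓝[>] 0) (𝓝 0) :=
    ((continuous_mul_const (φ 1)).tendsto' 0 0 (zero_mul _)).mono_left nhdsWithin_le_nhds
  exact ge_of_tendsto hlim (eventually_mem_nhdsWithin.mono hle)

lemma map_eq_zero_of_eq_zero_on_zeros (φ : C(K, ℝ) →ₚ[ℝ] ℝ) {f h : C(K, ℝ)} (hf : 0 ≤ f)
    (hfh : ∀ y, f y = 0 → h y = 0) (hφ : φ f = 0) : φ h = 0 := by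
  refine le_antisymm (map_nonpos_of_nonpos_on_zeros φ hf (fun y hy => (hfh y hy).le) hφ) ?_
  have := map_nonpos_of_nonpos_on_zeros φ (h := -h) hf (fun y hy => by simp [hfh y hy]) hφ
  simpa using this

/-- The Dirac measure at `x`, as the evaluation functional `f ↦ f x` in `P(K)`. -/
noncomputable def diracFunctional (x : K) : probMeasuresSet K :=
  ⟨WeakDual.CharacterSpace.continuousMapEval K ℝ x, rfl, fun _ hf => hf x⟩

lemma isEmbedding_diracFunctional [T2Space K] :
    IsEmbedding (diracFunctional : K → probMeasuresSet K) :=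
  (IsEmbedding.subtypeVal.comp (WeakDual.CharacterSpace.homeoEval K ℝ).isEmbedding).codRestrict
    (probMeasuresSet K) fun x => (diracFunctional x).2

lemma eq_diracFunctional_of_apply_eq_zero {x : K} {f : C(K, ℝ)} (hf : 0 ≤ f)
    (hfx : ∀ y, f y = 0 → y = x) {φ : probMeasuresSet K}
    (hφ : (φ : WeakDual ℝ C(K, ℝ)) f = 0) : φ = diracFunctional x := by
  let ψ : C(K, ℝ) →ₚ[ℝ] ℝ :=
    .mk₀ (WeakDual.toStrongDual (φ : WeakDual ℝ C(K, ℝ))).toLinearMap φ.2.2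
  have hψ1 : ψ 1 = 1 := φ.2.1
  refine Subtype.ext (DFunLike.ext _ _ fun g => ?_)
  have hg : ψ (g - g x • 1) = 0 :=
    map_eq_zero_of_eq_zero_on_zeros ψ hf (fun y hy => by simp [hfx y hy]) hφ
  rw [map_sub, map_smul, hψ1, smul_eq_mul, mul_one, sub_eq_zero] at hg
  exact hg

lemma exists_nonneg_eq_zero_iff_of_isGδ [RegularSpace K] {x : K} (hx : IsGδ ({x} : Set K)) :
    ∃ f : C(K, ℝ), 0 ≤ f ∧ ∀ y, f y = 0 ↔ y = x := by
  obtain ⟨f, hf, -, -, hf1⟩ := exists_continuous_one_zero_of_isCompact_of_isGδ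
    isCompact_singleton hx isClosed_empty (disjoint_empty _)
  refine ⟨1 - f, fun y => sub_nonneg.2 (hf1 y).2, fun y => ?_⟩
  have : y = x ↔ f y = 1 := Set.ext_iff.1 hf y
  rw [this, ContinuousMap.sub_apply, ContinuousMap.one_apply, sub_eq_zero, eq_comm]

lemma isGδ_singleton_diracFunctional [RegularSpace K] {x : K} (hx : IsGδ ({x} : Set K)) :
    IsGδ ({diracFunctional x} : Set (probMeasuresSet K)) := by
  obtain ⟨f, hf, hfx⟩ := exists_nonneg_eq_zero_iff_of_isGδ hx
  let evalf : probMeasuresSet K → ℝ := fun φ => (φ : WeakDual ℝ C(K, ℝ)) f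
  have hcont : Continuous evalf := (WeakDual.eval_continuous f).comp continuous_subtype_val
  have hpre : {diracFunctional x} = evalf ⁻¹' {0} := by
    refine Subset.antisymm (singleton_subset_iff.2 ((hfx x).2 rfl)) fun φ hφ => ?_
    exact eq_diracFunctional_of_apply_eq_zero hf (fun y => (hfx y).1) hφ
  rw [hpre]
  exact (IsGδ.singleton 0).preimage hcont

end Dirac

/-- If `P(K)` has a retractional skeleton, then the closure of the set of Gδ points of `K`
has a retractional skeleton. -/
theorem closure_Gdelta_points_hasRetractionalSkeleton (K : Type u) [TopologicalSpace K]
    [CompactSpace K] [T2Space K]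
    (h : HasRetractionalSkeleton ↥(probMeasuresSet K)) :
    HasRetractionalSkeleton ↥(closure {x : K | IsGδ ({x} : Set K)}) := by
  obtain ⟨𝔰⟩ := h
  have := isCompact_iff_compactSpace.1 (isClosed_closure (s := {x : K | IsGδ {x}})).isCompact
  refine 𝔰.hasRetractionalSkeleton_of_dense_preimage
    (isEmbedding_diracFunctional.comp IsEmbedding.subtypeVal) fun l => ?_
  have hsub : {x : K | IsGδ {x}} ⊆ diracFunctional ⁻¹' 𝔰.inducedSet := fun x hx =>
    𝔰.mem_inducedSet_of_isGδ (isGδ_singleton_diracFunctional hx)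
  rw [closure_subtype]
  refine closure_mono ?_ l.2
  exact fun x hx => ⟨⟨x, subset_closure hx⟩, hsub hx, rfl⟩
end

section
/- Let X be a Banach space and D ⊂ X* a set induced by a 1-projectional skeleton in X. Then there exists a convex, symmetric (i.e., R = −R) set R which is induced by an r-skeleton in the compact space (B_{X*}, w*); namely, if {P_s}_{s∈Γ} is a 1-projectional skeleton with D = ⋃_{s∈Γ} P_s*[X*], then {P_s*↾_{B_{X*}}}_{s∈Γ} is a retractional skeleton in (B_{X*}, w*) and R = ⋃_{s∈Γ} P_s*[B_{X*}] = D ∩ B_{X*} is convex and symmetric. -/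
open Filter Topology TopologicalSpace Set

universe u v

/-- A projectional skeleton in a normed space `X`: a family of bounded linear projections
indexed by an up-directed (nonempty) partially ordered set `Γ` such that
(i) `X = ⋃ s, P s [X]` and each `P s [X]` is separable;
(ii) `s ≤ t` implies `P s ∘ P t = P t ∘ P s = P s`;
(iii) each strictly increasing sequence has a supremum `t` with
`P t [X] = closure (⋃ n, P (f n) [X])`. -/
structure ProjectionalSkeleton (X : Type u) [NormedAddCommGroup X] [NormedSpace ℝ X] :
    Type (u + 1) where
  Γ : Type u
  [po : PartialOrder Γ]
  [ne : Nonempty Γ]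
  directed : ∀ s t : Γ, ∃ w, s ≤ w ∧ t ≤ w
  P : Γ → X →L[ℝ] X
  idem : ∀ s, ∀ x : X, P s (P s x) = P s x
  separable : ∀ s, IsSeparable (Set.range (P s))
  covers : ∀ x : X, ∃ s, x ∈ Set.range (P s)
  comp_eq_of_le : ∀ s t : Γ, s ≤ t → ∀ x : X, P s (P t x) = P s x ∧ P t (P s x) = P s x
  sup_seq : ∀ f : ℕ → Γ, StrictMono f → ∃ t : Γ, IsLUB (Set.range f) t ∧
    (Set.range (P t) : Set X) = closure (⋃ n, Set.range (P (f n)))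

/-- `X` has a 1-projectional skeleton: a projectional skeleton with `‖P s‖ ≤ 1` for all `s`. -/
def Has1ProjectionalSkeleton (X : Type u) [NormedAddCommGroup X] [NormedSpace ℝ X] : Prop :=
  ∃ 𝔰 : ProjectionalSkeleton X, ∀ s, ‖𝔰.P s‖ ≤ 1

/-- The closed unit ball of the dual of `X`, as a subset of the weak* dual `(X*, w*)`. -/
def dualBall (X : Type u) [NormedAddCommGroup X] [NormedSpace ℝ X] : Set (WeakDual ℝ X) :=
  {φ | ∀ x : X, |φ x| ≤ ‖x‖}

/-- The adjoint `P* : X* → X*`, `φ ↦ φ ∘ P`, acting on the weak* dual. -/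
noncomputable def dualAdjoint {X : Type u} [NormedAddCommGroup X] [NormedSpace ℝ X]
    (P : X →L[ℝ] X) (φ : WeakDual ℝ X) : WeakDual ℝ X :=
  show X →L[ℝ] ℝ from (show X →L[ℝ] ℝ from φ).comp P

/-!
The adjoint of a norm-one projection maps the dual ball into itself and is weak* continuous, and
`(P s)* φ` is weak* convergent as soon as `P s x` converges for every `x`. Both convergence axioms
thus become statements about the projections in `X`: for the net of all `P s`, every `x` is
eventually fixed; along an increasing sequence with supremum `t`, equicontinuity gives `P s x → x`
on the closure of the union of the ranges, which is the range of `P t`.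

A functional in the range of `(P s)*` is determined by its restriction to the separable set
`P s [X]`, so the weak* compact image of the ball is metrizable. Finally, the ranges of the
adjoints form a directed family of subspaces of `X*`, so `D` is itself a subspace, and its
intersection with the ball is convex and symmetric.
-/

lemma metrizableSpace_of_eqOn_isSeparable {K E Y : Type*} [TopologicalSpace K] [CompactSpace K]
    [TopologicalSpace E] [TopologicalSpace Y] [MetrizableSpace Y] {F : K → E → Y}
    (hF_right : ∀ k, Continuous (F k)) (hF_left : ∀ x, Continuous fun k => F k x)
    {S : Set E} (hS : IsSeparable S) (hF_sep : ∀ k l, EqOn (F k) (F l) S → k = l) :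
    MetrizableSpace K := by
  obtain ⟨c, hc, hSc⟩ := hS
  have : Countable c := hc.to_subtype
  let _ := metrizableSpaceMetric Y
  let restrict : K → c → Y := fun k x => F k x
  have restrict_continuous : Continuous restrict := continuous_pi fun x => hF_left x
  have restrict_injective : Function.Injective restrict := fun k l hkl =>
    have hc_eq : EqOn (F k) (F l) c := fun x hx => congrFun hkl ⟨x, hx⟩
    hF_sep k l ((hc_eq.closure (hF_right k) (hF_right l)).mono hSc)
  exact (restrict_continuous.isClosedEmbedding restrict_injective).isEmbedding.metrizableSpace

lemma tendsto_self_of_mem_closure_iUnion_range {ι E : Type*} [Preorder ι] [UniformSpace E]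
    {p : ι → E → E} (hp : Equicontinuous p) (hp_comp : ∀ i j, i ≤ j → ∀ x, p j (p i x) = p i x)
    {x : E} (hx : x ∈ closure (⋃ i, range (p i))) :
    Tendsto (fun i => p i x) atTop (𝓝 x) := by
  refine (hp x).tendsto_of_mem_closure (f := id) (tendsto_id.mono_left inf_le_left) ?_ hx
  intro y hy
  obtain ⟨i, z, rfl⟩ := mem_iUnion.1 hy
  refine tendsto_const_nhds.congr' ?_
  filter_upwards [eventually_ge_atTop i] with j hij
  exact (hp_comp i j hij z).symm

section Dual

variable {X : Type u} [NormedAddCommGroup X] [NormedSpace ℝ X]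

lemma dualAdjoint_comp (P Q : X →L[ℝ] X) (φ : WeakDual ℝ X) :
    dualAdjoint (P ∘L Q) φ = dualAdjoint Q (dualAdjoint P φ) := rfl

/-- The adjoint `P*` as a continuous linear endomorphism of `(X*, w*)`. -/
noncomputable def dualAdjointCLM (P : X →L[ℝ] X) : WeakDual ℝ X →L[ℝ] WeakDual ℝ X where
  toFun := dualAdjoint P
  map_add' _ _ := rfl
  map_smul' _ _ := rfl
  cont := WeakDual.continuous_of_continuous_eval fun x => WeakDual.eval_continuous (P x)

lemma dualAdjoint_eq_self_of_mem_range {P : X →L[ℝ] X} (hP : IsIdempotentElem P)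
    {φ : WeakDual ℝ X} (hφ : φ ∈ range (dualAdjoint P)) : dualAdjoint P φ = φ := by
  obtain ⟨ψ, rfl⟩ := hφ
  rw [← dualAdjoint_comp]
  exact congrArg (dualAdjoint · ψ) hP

lemma tendsto_dualAdjoint {ι : Type*} {l : Filter ι} {T : ι → X →L[ℝ] X} {T₀ : X →L[ℝ] X}
    (hT : ∀ x, Tendsto (fun i => T i x) l (𝓝 (T₀ x))) (φ : WeakDual ℝ X) :
    Tendsto (fun i => dualAdjoint (T i) φ) l (𝓝 (dualAdjoint T₀ φ)) :=
  tendsto_iff_forall_eval_tendsto_topDualPairing.2 fun x =>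
    ((map_continuous φ).tendsto _).comp (hT x)

lemma dualBall_eq_preimage_closedBall :
    dualBall X = WeakDual.toStrongDual ⁻¹' Metric.closedBall (0 : StrongDual ℝ X) 1 := by
  ext φ
  rw [mem_preimage, mem_closedBall_zero_iff, ContinuousLinearMap.opNorm_le_iff zero_le_one]
  simp only [one_mul]
  rfl

lemma isCompact_dualBall : IsCompact (dualBall X) :=
  dualBall_eq_preimage_closedBall (X := X) ▸ WeakDual.isCompact_closedBall 0 1

instance : CompactSpace (dualBall X) := isCompact_iff_compactSpace.1 isCompact_dualBall

lemma convex_dualBall : Convex ℝ (dualBall X) :=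
  dualBall_eq_preimage_closedBall (X := X) ▸
    (convex_closedBall (0 : StrongDual ℝ X) 1).linear_preimage WeakDual.toStrongDual.toLinearMap

lemma neg_mem_dualBall {φ : WeakDual ℝ X} (hφ : φ ∈ dualBall X) : -φ ∈ dualBall X :=
  fun x => (abs_neg (φ x)).trans_le (hφ x)

lemma mapsTo_dualAdjoint_dualBall {P : X →L[ℝ] X} (hP : ‖P‖ ≤ 1) :
    MapsTo (dualAdjoint P) (dualBall X) (dualBall X) := fun _ hφ x =>
  (hφ (P x)).trans ((P.le_of_opNorm_le hP x).trans_eq (one_mul _))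

/-- The restriction of `P*` to a self-map of `(B_{X*}, w*)`, for `‖P‖ ≤ 1`. -/
noncomputable def dualBallAdjoint (P : X →L[ℝ] X) (hP : ‖P‖ ≤ 1) :
    C(dualBall X, dualBall X) where
  toFun := (mapsTo_dualAdjoint_dualBall hP).restrict
  continuous_toFun := (dualAdjointCLM P).continuous.restrict (mapsTo_dualAdjoint_dualBall hP)

lemma range_dualBallAdjoint {P : X →L[ℝ] X} (hP : ‖P‖ ≤ 1) (hP_idem : IsIdempotentElem P) :
    range (dualBallAdjoint P hP) = Subtype.val ⁻¹' range (dualAdjoint P) := by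
  ext φ
  constructor
  · rintro ⟨ψ, rfl⟩
    exact ⟨ψ, rfl⟩
  · exact fun hφ => ⟨φ, Subtype.ext (dualAdjoint_eq_self_of_mem_range hP_idem hφ)⟩

lemma metrizableSpace_range_dualBallAdjoint {P : X →L[ℝ] X} (hP : ‖P‖ ≤ 1)
    (hP_idem : IsIdempotentElem P) (hP_sep : IsSeparable (range P)) :
    MetrizableSpace (range (dualBallAdjoint P hP)) := by
  have : CompactSpace (range (dualBallAdjoint P hP)) :=
    isCompact_iff_compactSpace.1 (isCompact_range (map_continuous _))
  refine metrizableSpace_of_eqOn_isSeparable (F := fun φ x => φ.1.1 x)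
    (fun φ => map_continuous φ.1.1)
    (fun x => (WeakDual.eval_continuous x).comp
      (continuous_subtype_val.comp continuous_subtype_val)) hP_sep ?_
  have apply_proj (φ : range (dualBallAdjoint P hP)) (x : X) : φ.1.1 (P x) = φ.1.1 x :=
    DFunLike.congr_fun
      (dualAdjoint_eq_self_of_mem_range hP_idem ((range_dualBallAdjoint hP hP_idem).subset φ.2)) x
  refine fun φ ψ h_eqOn => Subtype.ext (Subtype.ext (DFunLike.ext _ _ fun x => ?_))
  rw [← apply_proj φ, ← apply_proj ψ]
  exact h_eqOn (mem_range_self x)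

end Dual

namespace ProjectionalSkeleton

attribute [local instance] ProjectionalSkeleton.po ProjectionalSkeleton.ne

variable {X : Type u} [NormedAddCommGroup X] [NormedSpace ℝ X] (𝔰 : ProjectionalSkeleton X)

lemma comp_eq_left {s t : 𝔰.Γ} (hst : s ≤ t) : 𝔰.P s ∘L 𝔰.P t = 𝔰.P s :=
  ContinuousLinearMap.ext fun x => (𝔰.comp_eq_of_le s t hst x).1

lemma comp_eq_right {s t : 𝔰.Γ} (hst : s ≤ t) : 𝔰.P t ∘L 𝔰.P s = 𝔰.P s :=
  ContinuousLinearMap.ext fun x => (𝔰.comp_eq_of_le s t hst x).2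

lemma tendsto_apply_atTop (x : X) : Tendsto (fun s => 𝔰.P s x) atTop (𝓝 x) := by
  obtain ⟨s, y, rfl⟩ := 𝔰.covers x
  refine tendsto_const_nhds.congr' ?_
  filter_upwards [eventually_ge_atTop s] with t hst
  exact (𝔰.comp_eq_of_le s t hst y).2.symm

lemma tendsto_apply_of_monotone {ι : Type*} [Preorder ι] {f : ι → 𝔰.Γ} (hf : Monotone f)
    {C : ℝ} (hC : ∀ i, ‖𝔰.P (f i)‖ ≤ C) {t : 𝔰.Γ} (ht : t ∈ upperBounds (range f))
    (h_range : range (𝔰.P t) ⊆ closure (⋃ i, range (𝔰.P (f i)))) (x : X) :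
    Tendsto (fun i => 𝔰.P (f i) x) atTop (𝓝 (𝔰.P t x)) := by
  have h_bound : ∃ C, ∀ i, ‖𝔰.P (f i)‖ ≤ C := ⟨C, hC⟩
  have h_equicontinuous : Equicontinuous fun i => ⇑(𝔰.P (f i)) :=
    ((NormedSpace.equicontinuous_TFAE fun i => 𝔰.P (f i)).out 1 5).2 h_bound
  have h_tendsto : Tendsto (fun i => 𝔰.P (f i) (𝔰.P t x)) atTop (𝓝 (𝔰.P t x)) :=
    tendsto_self_of_mem_closure_iUnion_range h_equicontinuous
      (fun i j hij y => (𝔰.comp_eq_of_le _ _ (hf hij) y).2) (h_range (mem_range_self x))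
  exact h_tendsto.congr fun i => (𝔰.comp_eq_of_le _ _ (ht (mem_range_self i)) x).1

lemma dualAdjoint_dualAdjoint_left {s t : 𝔰.Γ} (hst : s ≤ t) (φ : WeakDual ℝ X) :
    dualAdjoint (𝔰.P s) (dualAdjoint (𝔰.P t) φ) = dualAdjoint (𝔰.P s) φ := by
  rw [← dualAdjoint_comp, 𝔰.comp_eq_right hst]

lemma dualAdjoint_dualAdjoint_right {s t : 𝔰.Γ} (hst : s ≤ t) (φ : WeakDual ℝ X) :
    dualAdjoint (𝔰.P t) (dualAdjoint (𝔰.P s) φ) = dualAdjoint (𝔰.P s) φ := by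
  rw [← dualAdjoint_comp, 𝔰.comp_eq_left hst]

lemma monotone_range_dualAdjointCLM :
    Monotone fun s => (dualAdjointCLM (𝔰.P s)).range := by
  rintro s t hst _ ⟨φ, rfl⟩
  exact ⟨dualAdjoint (𝔰.P s) φ, 𝔰.dualAdjoint_dualAdjoint_right hst φ⟩

/-- The set `D(𝔰) = ⋃ s, (P s)* [X*]` induced by `𝔰`, as a subspace of `X*`; see
`coe_inducedSubspace`. -/
noncomputable def inducedSubspace : Submodule ℝ (WeakDual ℝ X) :=
  ⨆ s, (dualAdjointCLM (𝔰.P s)).range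

lemma coe_inducedSubspace :
    (𝔰.inducedSubspace : Set (WeakDual ℝ X)) = ⋃ s, range (dualAdjoint (𝔰.P s)) :=
  have : IsDirectedOrder 𝔰.Γ := ⟨𝔰.directed⟩
  Submodule.coe_iSup_of_directed _ 𝔰.monotone_range_dualAdjointCLM.directed_le

/-- The retractional skeleton `{(P s)*↾B_{X*}}` of `(B_{X*}, w*)`. -/
noncomputable def dualBallSkeleton (h𝔰 : ∀ s, ‖𝔰.P s‖ ≤ 1) :
    RetractionalSkeleton (dualBall X) where
  Γ := 𝔰.Γ
  directed := 𝔰.directed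
  r s := dualBallAdjoint (𝔰.P s) (h𝔰 s)
  isRetraction s φ := Subtype.ext (𝔰.dualAdjoint_dualAdjoint_left le_rfl φ)
  metrizable s :=
    metrizableSpace_range_dualBallAdjoint (h𝔰 s) (𝔰.comp_eq_left le_rfl) (𝔰.separable s)
  tendsto_id φ := tendsto_subtype_rng.2 <|
    tendsto_dualAdjoint (T₀ := .id ℝ X) 𝔰.tendsto_apply_atTop φ
  comp_eq_of_le s t hst φ :=
    ⟨Subtype.ext (𝔰.dualAdjoint_dualAdjoint_left hst φ),
      Subtype.ext (𝔰.dualAdjoint_dualAdjoint_right hst φ)⟩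
  sup_seq f hf := by
    obtain ⟨t, ht, h_range⟩ := 𝔰.sup_seq f hf
    exact ⟨t, ht, fun φ => tendsto_subtype_rng.2 <|
      tendsto_dualAdjoint
        (𝔰.tendsto_apply_of_monotone hf.monotone (fun n => h𝔰 (f n)) ht.1 h_range.subset) φ⟩

lemma inducedSet_dualBallSkeleton (h𝔰 : ∀ s, ‖𝔰.P s‖ ≤ 1) :
    (𝔰.dualBallSkeleton h𝔰).inducedSet = Subtype.val ⁻¹' (𝔰.inducedSubspace : Set _) := by
  rw [coe_inducedSubspace, preimage_iUnion]
  exact iUnion_congr fun s => range_dualBallAdjoint (h𝔰 s) (𝔰.comp_eq_left le_rfl)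

end ProjectionalSkeleton

theorem convex_symmetric_induced_of_one_projectional_skeleton_general (X : Type u)
    [NormedAddCommGroup X] [NormedSpace ℝ X]
    (D : Set (WeakDual ℝ X))
    (h : ∃ 𝔰 : ProjectionalSkeleton X, (∀ s, ‖𝔰.P s‖ ≤ 1) ∧
      D = ⋃ s, Set.range (dualAdjoint (𝔰.P s))) :
    ∃ R : Set (WeakDual ℝ X), R ⊆ dualBall X ∧ Convex ℝ R ∧ (∀ φ ∈ R, -φ ∈ R) ∧
      IsInducedByRSkeleton (Subtype.val ⁻¹' R : Set ↥(dualBall X)) ∧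
      R = D ∩ dualBall X := by
  obtain ⟨𝔰, h𝔰, rfl⟩ := h
  rw [← 𝔰.coe_inducedSubspace]
  refine ⟨_, inter_subset_right, 𝔰.inducedSubspace.convex.inter convex_dualBall, ?symmetric,
    ⟨𝔰.dualBallSkeleton h𝔰, ?induced⟩, rfl⟩
  case symmetric => exact fun φ hφ => ⟨neg_mem hφ.1, neg_mem_dualBall hφ.2⟩
  case induced => rw [𝔰.inducedSet_dualBallSkeleton, Subtype.preimage_coe_inter_self]

/-- If `D ⊆ X*` is induced by a 1-projectional skeleton `{P s}` (i.e. `D = ⋃ s, P s* [X*]`),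
then there is a convex symmetric set `R` induced by an r-skeleton in `(B_{X*}, w*)`;
namely `R = D ∩ B_{X*}` works. -/
theorem convex_symmetric_induced_of_one_projectional_skeleton (X : Type u)
    [NormedAddCommGroup X] [NormedSpace ℝ X] [CompleteSpace X]
    (D : Set (WeakDual ℝ X))
    (h : ∃ 𝔰 : ProjectionalSkeleton X, (∀ s, ‖𝔰.P s‖ ≤ 1) ∧
      D = ⋃ s, Set.range (dualAdjoint (𝔰.P s))) :
    ∃ R : Set (WeakDual ℝ X), R ⊆ dualBall X ∧ Convex ℝ R ∧ (∀ φ ∈ R, -φ ∈ R) ∧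
      IsInducedByRSkeleton (Subtype.val ⁻¹' R : Set ↥(dualBall X)) ∧
      R = D ∩ dualBall X :=
  convex_symmetric_induced_of_one_projectional_skeleton_general X D h
end
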